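/- Consider a plant as follows: $B = [0,L_1]\times[0,L_2]$, $\mathcal{H}$ a smooth second-order density with $x$-slots in $\mathbb{R}^n$, $x:\mathbb{R}\times B\to\mathbb{R}^n$ smooth, smooth coefficient fields $\mathcal{J}^{\alpha\beta}, \mathcal{R}^{\alpha\beta}, \mathcal{G}^\alpha_\xi:\mathbb{R}\times B\to\mathbb{R}$ with $\mathcal{J}^{\alpha\beta} = -\mathcal{J}^{\beta\alpha}$ and $[\mathcal{R}^{\alpha\beta}]$ symmetric positive semi-definite at every point, such that $\dot{x}^\alpha = (\mathcal{J}^{\alpha\beta}-\mathcal{R}^{\alpha\beta})\delta_\beta\mathcal{H}[x] + \mathcal{G}^\alpha_\xi u^\xi$ with output densities $y_\xi = \mathcal{G}^\alpha_\xi\delta_\alpha\mathcal{H}[x]$, and suppose all boundary contributions of $\mathcal{H}$ vanish along the solution (edge and corner terms of the rectangle decomposition are zero for all $t$). Consider a controller: $H_c:\mathbb{R}^{n_c}\to\mathbb{R}$ smooth, $J_c, R_c, G_c$ constant matrices with $J_c$ skew-symmetric and $R_c$ symmetric positive semi-definite, $x_c:\mathbb{R}\to\mathbb{R}^{n_c}$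 smooth with $\dot{x}_c^{\alpha_c} = (J_c^{\alpha_c\beta_c}-R_c^{\alpha_c\beta_c})\partial_{\beta_c}H_c(x_c) + G^{\alpha_c}_{c,\xi}u_c^\xi$ and $y_{c,\xi} = G^{\beta_c}_{c,\xi}\partial_{\beta_c}H_c(x_c)$. Suppose the signals are coupled by $u_c^\xi(t) = K^{\xi\eta}\iint_B y_\eta\,dz^1dz^2$ and $u^\xi(t) = -K^{\xi\eta}y_{c,\eta}(t)$ with $K$ a symmetric $l\times l$ matrix. Then the closed-loop Hamiltonian $\mathscr{H}_{cl}(t) = \iint_B\mathcal{H}[x]\,dz^1dz^2 + H_c(x_c(t))$ satisfies $\frac{d\mathscr{H}_{cl}}{dt} = -\iint_B\delta_\alpha\mathcal{H}[x]\,\mathcal{R}^{\alpha\beta}\,\delta_\beta\mathcal{H}[x]\,dz^1dz^2 - \partial_{\alpha_c}H_c\,R_c^{\alpha_c\beta_c}\,\partial_{\beta_c}H_c \le 0$ for all $t$. -/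

import Mathlib

open MeasureTheory

/-- The jet space `(z¹, z², x, x_[10], x_[01], x_[20], x_[11], x_[02])`. -/
abbrev Jet2 (n : ℕ) :=
  ℝ × ℝ × (Fin n → ℝ) × (Fin n → ℝ) × (Fin n → ℝ) × (Fin n → ℝ) × (Fin n → ℝ) × (Fin n → ℝ)

/-- Time derivative of a field `f(t,z¹,z²)`. -/
noncomputable def pt2 {E : Type*} [NormedAddCommGroup E] [NormedSpace ℝ E]
    (f : ℝ → ℝ → ℝ → E) : ℝ → ℝ → ℝ → E := fun t a b => deriv (fun s => f s a b) t

/-- Derivative `∂₁` with respect to `z¹`. -/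
noncomputable def dz1 {E : Type*} [NormedAddCommGroup E] [NormedSpace ℝ E]
    (f : ℝ → ℝ → ℝ → E) : ℝ → ℝ → ℝ → E := fun t a b => deriv (fun s => f t s b) a

/-- Derivative `∂₂` with respect to `z²`. -/
noncomputable def dz2 {E : Type*} [NormedAddCommGroup E] [NormedSpace ℝ E]
    (f : ℝ → ℝ → ℝ → E) : ℝ → ℝ → ℝ → E := fun t a b => deriv (fun s => f t a s) b

/-- Second-order jet of the field `x` at `(t, z¹, z²)`. -/
noncomputable def jet2 {n : ℕ} (x : ℝ → ℝ → ℝ → Fin n → ℝ) (t a b : ℝ) : Jet2 n :=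
  (a, b, x t a b, dz1 x t a b, dz2 x t a b,
    dz1 (dz1 x) t a b, dz1 (dz2 x) t a b, dz2 (dz2 x) t a b)

/-- Composed partial derivative `(∂H/∂x^α)[x]`. -/
noncomputable def sl00 {n : ℕ} (H : Jet2 n → ℝ) (x : ℝ → ℝ → ℝ → Fin n → ℝ)
    (α : Fin n) : ℝ → ℝ → ℝ → ℝ :=
  fun t a b => fderiv ℝ H (jet2 x t a b) (0, 0, Pi.single α 1, 0, 0, 0, 0, 0)

/-- Composed partial derivative `(∂H/∂x^α_[10])[x]`. -/
noncomputable def sl10 {n : ℕ} (H : Jet2 n → ℝ) (x : ℝ → ℝ → ℝ → Fin n → ℝ)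
    (α : Fin n) : ℝ → ℝ → ℝ → ℝ :=
  fun t a b => fderiv ℝ H (jet2 x t a b) (0, 0, 0, Pi.single α 1, 0, 0, 0, 0)

/-- Composed partial derivative `(∂H/∂x^α_[01])[x]`. -/
noncomputable def sl01 {n : ℕ} (H : Jet2 n → ℝ) (x : ℝ → ℝ → ℝ → Fin n → ℝ)
    (α : Fin n) : ℝ → ℝ → ℝ → ℝ :=
  fun t a b => fderiv ℝ H (jet2 x t a b) (0, 0, 0, 0, Pi.single α 1, 0, 0, 0)

/-- Composed partial derivative `(∂H/∂x^α_[20])[x]`. -/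
noncomputable def sl20 {n : ℕ} (H : Jet2 n → ℝ) (x : ℝ → ℝ → ℝ → Fin n → ℝ)
    (α : Fin n) : ℝ → ℝ → ℝ → ℝ :=
  fun t a b => fderiv ℝ H (jet2 x t a b) (0, 0, 0, 0, 0, Pi.single α 1, 0, 0)

/-- Composed partial derivative `(∂H/∂x^α_[11])[x]`. -/
noncomputable def sl11 {n : ℕ} (H : Jet2 n → ℝ) (x : ℝ → ℝ → ℝ → Fin n → ℝ)
    (α : Fin n) : ℝ → ℝ → ℝ → ℝ :=
  fun t a b => fderiv ℝ H (jet2 x t a b) (0, 0, 0, 0, 0, 0, Pi.single α 1, 0)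

/-- Composed partial derivative `(∂H/∂x^α_[02])[x]`. -/
noncomputable def sl02 {n : ℕ} (H : Jet2 n → ℝ) (x : ℝ → ℝ → ℝ → Fin n → ℝ)
    (α : Fin n) : ℝ → ℝ → ℝ → ℝ :=
  fun t a b => fderiv ℝ H (jet2 x t a b) (0, 0, 0, 0, 0, 0, 0, Pi.single α 1)

/-- Variational derivative `δ_α H[x]` on the two-dimensional spatial domain. -/
noncomputable def varDer2 {n : ℕ} (H : Jet2 n → ℝ) (x : ℝ → ℝ → ℝ → Fin n → ℝ)
    (α : Fin n) : ℝ → ℝ → ℝ → ℝ :=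
  fun t a b =>
    sl00 H x α t a b - dz1 (sl10 H x α) t a b - dz2 (sl01 H x α) t a b
      + dz1 (dz1 (sl20 H x α)) t a b + dz1 (dz2 (sl11 H x α)) t a b
      + dz2 (dz2 (sl02 H x α)) t a b

/-- Boundary contribution on edges with normal direction `z¹`:
`ẋ^α (H^[10]_α - ∂₁H^[20]_α - ∂₂H^[11]_α) + ẋ^α_[10] H^[20]_α` (summed over `α`). -/
noncomputable def edge1 {n : ℕ} (H : Jet2 n → ℝ) (x : ℝ → ℝ → ℝ → Fin n → ℝ) :
    ℝ → ℝ → ℝ → ℝ :=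
  fun t a b =>
    ∑ α : Fin n,
      (pt2 x t a b α * (sl10 H x α t a b - dz1 (sl20 H x α) t a b - dz2 (sl11 H x α) t a b)
        + pt2 (dz1 x) t a b α * sl20 H x α t a b)

/-- Boundary contribution on edges with normal direction `z²`:
`ẋ^α (H^[01]_α - ∂₂H^[02]_α - ∂₁H^[11]_α) + ẋ^α_[01] H^[02]_α` (summed over `α`). -/
noncomputable def edge2 {n : ℕ} (H : Jet2 n → ℝ) (x : ℝ → ℝ → ℝ → Fin n → ℝ) :
    ℝ → ℝ → ℝ → ℝ :=
  fun t a b =>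
    ∑ α : Fin n,
      (pt2 x t a b α * (sl01 H x α t a b - dz2 (sl02 H x α) t a b - dz1 (sl11 H x α) t a b)
        + pt2 (dz2 x) t a b α * sl02 H x α t a b)

/-- Corner contribution `ẋ^α H^[11]_α` (summed over `α`). -/
noncomputable def corner2 {n : ℕ} (H : Jet2 n → ℝ) (x : ℝ → ℝ → ℝ → Fin n → ℝ) :
    ℝ → ℝ → ℝ → ℝ :=
  fun t a b => ∑ α : Fin n, pt2 x t a b α * sl11 H x α t a b

/-- Gradient component `∂_{β_c} H_c (x_c(t))` of the controller Hamiltonian. -/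
noncomputable def gradC {nc : ℕ} (Hc : (Fin nc → ℝ) → ℝ) (xc : ℝ → Fin nc → ℝ)
    (βc : Fin nc) (t : ℝ) : ℝ :=
  fderiv ℝ Hc (xc t) (Pi.single βc 1)

/-- Controller output `y_{c,ξ} = G_{c,ξ}^{β_c} ∂_{β_c} H_c`. -/
noncomputable def ycOut {nc l : ℕ} (Hc : (Fin nc → ℝ) → ℝ) (xc : ℝ → Fin nc → ℝ)
    (Gc : Fin nc → Fin l → ℝ) (ξ : Fin l) (t : ℝ) : ℝ :=
  ∑ βc : Fin nc, Gc βc ξ * gradC Hc xc βc t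


def Sm {E : Type*} [NormedAddCommGroup E] [NormedSpace ℝ E] (f : ℝ → ℝ → ℝ → E) : Prop :=
  ContDiff ℝ (⊤ : ℕ∞) (fun q : ℝ × ℝ × ℝ => f q.1 q.2.1 q.2.2)

section calcu
variable {E : Type*} [NormedAddCommGroup E] [NormedSpace ℝ E] {f : ℝ → ℝ → ℝ → E}

theorem Sm.hd (hf : Sm f) (t a b : ℝ) : HasFDerivAt (fun q : ℝ × ℝ × ℝ => f q.1 q.2.1 q.2.2)
    (fderiv ℝ (fun q : ℝ × ℝ × ℝ => f q.1 q.2.1 q.2.2) (t, a, b)) (t, a, b) :=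
  ((ContDiff.differentiable hf (by simp)) _).hasFDerivAt

theorem Sm.haux_t (hf : Sm f) (t a b : ℝ) : HasDerivAt (fun s => f s a b)
    (fderiv ℝ (fun q : ℝ × ℝ × ℝ => f q.1 q.2.1 q.2.2) (t, a, b) (1, 0, 0)) t :=
  HasFDerivAt.comp_hasDerivAt (f := fun s : ℝ => ((s, a, b) : ℝ × ℝ × ℝ)) t (hf.hd t a b)
    ((hasDerivAt_id t).prodMk ((hasDerivAt_const t a).prodMk (hasDerivAt_const t b)))

theorem Sm.haux_1 (hf : Sm f) (t a b : ℝ) : HasDerivAt (fun s => f t s b)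
    (fderiv ℝ (fun q : ℝ × ℝ × ℝ => f q.1 q.2.1 q.2.2) (t, a, b) (0, 1, 0)) a :=
  HasFDerivAt.comp_hasDerivAt (f := fun s : ℝ => ((t, s, b) : ℝ × ℝ × ℝ)) a (hf.hd t a b)
    ((hasDerivAt_const a t).prodMk ((hasDerivAt_id a).prodMk (hasDerivAt_const a b)))

theorem Sm.haux_2 (hf : Sm f) (t a b : ℝ) : HasDerivAt (fun s => f t a s)
    (fderiv ℝ (fun q : ℝ × ℝ × ℝ => f q.1 q.2.1 q.2.2) (t, a, b) (0, 0, 1)) b :=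
  HasFDerivAt.comp_hasDerivAt (f := fun s : ℝ => ((t, a, s) : ℝ × ℝ × ℝ)) b (hf.hd t a b)
    ((hasDerivAt_const b t).prodMk ((hasDerivAt_const b a).prodMk (hasDerivAt_id b)))

theorem Sm.pt_eq (hf : Sm f) (t a b : ℝ) : pt2 f t a b =
    fderiv ℝ (fun q : ℝ × ℝ × ℝ => f q.1 q.2.1 q.2.2) (t, a, b) (1, 0, 0) := (hf.haux_t t a b).deriv
theorem Sm.d1_eq (hf : Sm f) (t a b : ℝ) : dz1 f t a b =
    fderiv ℝ (fun q : ℝ × ℝ × ℝ => f q.1 q.2.1 q.2.2) (t, a, b) (0, 1, 0) := (hf.haux_1 t a b).deriv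
theorem Sm.d2_eq (hf : Sm f) (t a b : ℝ) : dz2 f t a b =
    fderiv ℝ (fun q : ℝ × ℝ × ℝ => f q.1 q.2.1 q.2.2) (t, a, b) (0, 0, 1) := (hf.haux_2 t a b).deriv

theorem Sm.ht (hf : Sm f) (t a b : ℝ) : HasDerivAt (fun s => f s a b) (pt2 f t a b) t := by
  rw [hf.pt_eq]; exact hf.haux_t t a b
theorem Sm.h1 (hf : Sm f) (t a b : ℝ) : HasDerivAt (fun s => f t s b) (dz1 f t a b) a := by
  rw [hf.d1_eq]; exact hf.haux_1 t a b
theorem Sm.h2 (hf : Sm f) (t a b : ℝ) : HasDerivAt (fun s => f t a s) (dz2 f t a b) b := by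
  rw [hf.d2_eq]; exact hf.haux_2 t a b

theorem Sm.aux (hf : Sm f) (v : ℝ × ℝ × ℝ) : ContDiff ℝ (⊤ : ℕ∞)
    (fun q => fderiv ℝ (fun q : ℝ × ℝ × ℝ => f q.1 q.2.1 q.2.2) q v) :=
  (ContDiff.fderiv_right hf (m := (⊤ : ℕ∞)) (by simp)).clm_apply contDiff_const

theorem Sm.pt (hf : Sm f) : Sm (pt2 f) := by
  unfold Sm; simp only [hf.pt_eq]; exact hf.aux _
theorem Sm.d1 (hf : Sm f) : Sm (dz1 f) := by
  unfold Sm; simp only [hf.d1_eq]; exact hf.aux _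
theorem Sm.d2 (hf : Sm f) : Sm (dz2 f) := by
  unfold Sm; simp only [hf.d2_eq]; exact hf.aux _

theorem Sm.symm (hf : Sm f) (p v w : ℝ × ℝ × ℝ) :
    fderiv ℝ (fun q => fderiv ℝ (fun q : ℝ × ℝ × ℝ => f q.1 q.2.1 q.2.2) q v) p w =
    fderiv ℝ (fun q => fderiv ℝ (fun q : ℝ × ℝ × ℝ => f q.1 q.2.1 q.2.2) q w) p v := by
  have hd : DifferentiableAt ℝ (fderiv ℝ (fun q : ℝ × ℝ × ℝ => f q.1 q.2.1 q.2.2)) p :=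
    (ContDiff.fderiv_right hf (m := (⊤ : ℕ∞)) (by simp)).differentiable (by simp) p
  have h := (ContDiff.contDiffAt hf (x := p)).isSymmSndFDerivAt (by simp only [minSmoothness_of_isRCLikeNormedField]; exact WithTop.coe_le_coe.2 (le_top : (2:ℕ∞) ≤ ⊤)) v w
  rw [fderiv_clm_apply hd (differentiableAt_const _), fderiv_clm_apply hd (differentiableAt_const _)]
  simpa using h.symm

theorem Sm.c1t (hf : Sm f) : pt2 (dz1 f) = dz1 (pt2 f) := by
  funext t a b
  rw [hf.d1.pt_eq, hf.pt.d1_eq]; simp only [hf.pt_eq, hf.d1_eq]; exact hf.symm _ _ _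
theorem Sm.c2t (hf : Sm f) : pt2 (dz2 f) = dz2 (pt2 f) := by
  funext t a b
  rw [hf.d2.pt_eq, hf.pt.d2_eq]; simp only [hf.pt_eq, hf.d2_eq]; exact hf.symm _ _ _
theorem Sm.c12 (hf : Sm f) : dz2 (dz1 f) = dz1 (dz2 f) := by
  funext t a b
  rw [hf.d1.d2_eq, hf.d2.d1_eq]; simp only [hf.d2_eq, hf.d1_eq]; exact hf.symm _ _ _
end calcu

theorem Sm.cont2 {f : ℝ → ℝ → ℝ → ℝ} (hf : Sm f) (t : ℝ) : Continuous (fun p : ℝ × ℝ => f t p.1 p.2) :=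
  (ContDiff.continuous hf).comp (f := fun p : ℝ × ℝ => (t, p.1, p.2)) (by fun_prop)

theorem hasDerivAt_int {F F' : ℝ → ℝ → ℝ} (hF : Continuous (Function.uncurry F))
    (hF' : Continuous (Function.uncurry F')) (hd : ∀ t a, HasDerivAt (fun s => F s a) (F' t a) t)
    (A B t : ℝ) : HasDerivAt (fun s => ∫ a in A..B, F s a) (∫ a in A..B, F' t a) t := by
  obtain ⟨C, hC⟩ := ((isCompact_Icc (a := t-1) (b := t+1)).prod
    (isCompact_uIcc (a := A) (b := B))).exists_bound_of_continuousOn hF'.continuousOn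
  have c1 : ∀ s, Continuous (F s) := fun s => hF.comp (f := fun a => (s, a)) (by fun_prop)
  have c2 : ∀ s, Continuous (F' s) := fun s => hF'.comp (f := fun a => (s, a)) (by fun_prop)
  refine (intervalIntegral.hasDerivAt_integral_of_dominated_loc_of_deriv_le (bound := fun _ => C)
    (s := Set.Icc (t-1) (t+1)) (Icc_mem_nhds (by linarith) (by linarith))
    (Filter.Eventually.of_forall fun s => (c1 s).aestronglyMeasurable)
    ((c1 t).intervalIntegrable _ _) ((c2 t).aestronglyMeasurable)
    (Filter.Eventually.of_forall fun a ha s hs => hC (s, a) ⟨hs, Set.uIoc_subset_uIcc ha⟩)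
    (by simp)
    (Filter.Eventually.of_forall fun a ha s hs => hd s a)).2

theorem Sm.hasDerivAt_int2 {f : ℝ → ℝ → ℝ → ℝ} (hf : Sm f) (L1 L2 t : ℝ) :
    HasDerivAt (fun s => ∫ a in (0:ℝ)..L1, ∫ b in (0:ℝ)..L2, f s a b)
      (∫ a in (0:ℝ)..L1, ∫ b in (0:ℝ)..L2, pt2 f t a b) t := by
  have key : ∀ {g : ℝ → ℝ → ℝ → ℝ}, Sm g →
      Continuous (Function.uncurry fun s a => ∫ b in (0:ℝ)..L2, g s a b) := by
    intro g hg
    refine intervalIntegral.continuous_parametric_intervalIntegral_of_continuous'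
      (f := fun (p : ℝ × ℝ) b => g p.1 p.2 b) ?_ 0 L2
    exact (ContDiff.continuous hg).comp (f := fun p : (ℝ × ℝ) × ℝ => (p.1.1, p.1.2, p.2))
      (by fun_prop)
  refine hasDerivAt_int (F := fun s a => ∫ b in (0:ℝ)..L2, f s a b)
    (F' := fun s a => ∫ b in (0:ℝ)..L2, pt2 f s a b) (key hf) (key hf.pt) ?_ 0 L1 t
  intro t a
  refine hasDerivAt_int (F := fun s b => f s a b) (F' := fun s b => pt2 f s a b) ?_ ?_ ?_ _ _ t
  · exact (ContDiff.continuous hf).comp (f := fun p : ℝ × ℝ => (p.1, a, p.2)) (by fun_prop)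
  · exact (ContDiff.continuous hf.pt).comp (f := fun p : ℝ × ℝ => (p.1, a, p.2)) (by fun_prop)
  · intro s b; exact hf.ht s a b

theorem swap_int {g : ℝ → ℝ → ℝ} (hg : Continuous (fun p : ℝ × ℝ => g p.1 p.2)) (L1 L2 : ℝ) :
    (∫ a in (0:ℝ)..L1, ∫ b in (0:ℝ)..L2, g a b) = ∫ b in (0:ℝ)..L2, ∫ a in (0:ℝ)..L1, g a b := by
  apply MeasureTheory.intervalIntegral_intervalIntegral_swap
  have : IntegrableOn (Function.uncurry g) (Set.uIcc 0 L1 ×ˢ Set.uIcc 0 L2)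
    (volume.prod volume) :=
    ContinuousOn.integrableOn_compact (isCompact_uIcc.prod isCompact_uIcc) (Continuous.continuousOn hg)
  exact this.mono_set (Set.prod_mono Set.uIoc_subset_uIcc Set.uIoc_subset_uIcc)

theorem Sm.ftc1 {f : ℝ → ℝ → ℝ → ℝ} (hf : Sm f) (t b A B : ℝ) :
    (∫ a in A..B, dz1 f t a b) = f t B b - f t A b := by
  apply intervalIntegral.integral_eq_sub_of_hasDerivAt (fun a _ => hf.h1 t a b)
  exact ((hf.d1.cont2 t).comp (f := fun a => (a, b)) (by fun_prop)).intervalIntegrable _ _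
theorem Sm.ftc2 {f : ℝ → ℝ → ℝ → ℝ} (hf : Sm f) (t a A B : ℝ) :
    (∫ b in A..B, dz2 f t a b) = f t a B - f t a A := by
  apply intervalIntegral.integral_eq_sub_of_hasDerivAt (fun b _ => hf.h2 t a b)
  exact ((hf.d2.cont2 t).comp (f := fun b => (a, b)) (by fun_prop)).intervalIntegrable _ _

section arith
variable {E F : Type*} [NormedAddCommGroup E] [NormedSpace ℝ E] [NormedAddCommGroup F]
  [NormedSpace ℝ F]

theorem Sm.mk {f : ℝ → ℝ → ℝ → E} {g : ℝ → ℝ → ℝ → F} (hf : Sm f) (hg : Sm g) :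
    Sm (fun t a b => (f t a b, g t a b)) := ContDiff.prodMk hf hg
theorem Sm.mul {f g : ℝ → ℝ → ℝ → ℝ} (hf : Sm f) (hg : Sm g) :
    Sm (fun t a b => f t a b * g t a b) := ContDiff.mul hf hg
theorem Sm.add {f g : ℝ → ℝ → ℝ → ℝ} (hf : Sm f) (hg : Sm g) :
    Sm (fun t a b => f t a b + g t a b) := ContDiff.add hf hg
theorem Sm.sub {f g : ℝ → ℝ → ℝ → ℝ} (hf : Sm f) (hg : Sm g) :
    Sm (fun t a b => f t a b - g t a b) := ContDiff.sub hf hg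
theorem Sm.sum {ι : Type*} [Fintype ι] {f : ι → ℝ → ℝ → ℝ → ℝ} (hf : ∀ i, Sm (f i)) :
    Sm (fun t a b => ∑ i, f i t a b) := ContDiff.sum fun i _ => hf i
theorem Sm.app {n : ℕ} {f : ℝ → ℝ → ℝ → Fin n → ℝ} (hf : Sm f) (i : Fin n) :
    Sm (fun t a b => f t a b i) := contDiff_pi.1 hf i
end arith

theorem lin_sum {n : ℕ} (φ : (Fin n → ℝ) → ℝ) (ha : ∀ v w, φ (v + w) = φ v + φ w)
    (hs : ∀ (c : ℝ) v, φ (c • v) = c * φ v) (w : Fin n → ℝ) :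
    φ w = ∑ α, w α * φ (Pi.single α 1) := by
  have h := LinearMap.pi_apply_eq_sum_univ (R := ℝ)
    ({ toFun := φ, map_add' := ha, map_smul' := hs } : (Fin n → ℝ) →ₗ[ℝ] ℝ) w
  have e : ∀ α : Fin n, (fun j => if α = j then (1:ℝ) else 0) = Pi.single α 1 := by
    intro α; funext j; simp [Pi.single_apply, eq_comm]
  simpa [e] using h

theorem jet_lin {n : ℕ} (L : Jet2 n →L[ℝ] ℝ) (w0 w1 w2 w3 w4 w5 : Fin n → ℝ) :
    L (0, 0, w0, w1, w2, w3, w4, w5) = ∑ α,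
      (w0 α * L (0, 0, Pi.single α 1, 0, 0, 0, 0, 0) + w1 α * L (0, 0, 0, Pi.single α 1, 0, 0, 0, 0)
      + w2 α * L (0, 0, 0, 0, Pi.single α 1, 0, 0, 0) + w3 α * L (0, 0, 0, 0, 0, Pi.single α 1, 0, 0)
      + w4 α * L (0, 0, 0, 0, 0, 0, Pi.single α 1, 0)
      + w5 α * L (0, 0, 0, 0, 0, 0, 0, Pi.single α 1)) := by
  simp only [Finset.sum_add_distrib]
  rw [← lin_sum (fun w => L (0, 0, w, 0, 0, 0, 0, 0)), ← lin_sum (fun w => L (0, 0, 0, w, 0, 0, 0, 0)),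
    ← lin_sum (fun w => L (0, 0, 0, 0, w, 0, 0, 0)), ← lin_sum (fun w => L (0, 0, 0, 0, 0, w, 0, 0)),
    ← lin_sum (fun w => L (0, 0, 0, 0, 0, 0, w, 0)), ← lin_sum (fun w => L (0, 0, 0, 0, 0, 0, 0, w))]
  · simp only [← map_add]; simp
  all_goals first
    | (intro v w; rw [← map_add]; simp)
    | (intro c w; rw [← smul_eq_mul, ← map_smul]; simp)

section plant
variable {n : ℕ} {H : Jet2 n → ℝ} {x : ℝ → ℝ → ℝ → Fin n → ℝ}

theorem sm_jet (hx : Sm x) : Sm (jet2 x) := by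
  have h1 : Sm (fun _ a _ : ℝ => a) := by unfold Sm; fun_prop
  have h2 : Sm (fun _ _ b : ℝ => b) := by unfold Sm; fun_prop
  exact h1.mk (h2.mk (hx.mk (hx.d1.mk (hx.d2.mk (hx.d1.d1.mk (hx.d2.d1.mk hx.d2.d2))))))

theorem sm_sl (hH : ContDiff ℝ (⊤ : ℕ∞) H) (hx : Sm x) (v : Jet2 n) :
    Sm (fun t a b => fderiv ℝ H (jet2 x t a b) v) :=
  ((hH.fderiv_right (m := (⊤ : ℕ∞)) (by simp)).comp (sm_jet hx)).clm_apply contDiff_const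

variable (hH : ContDiff ℝ (⊤ : ℕ∞) H) (hx : Sm x)
include hH hx

theorem sm00 (α : Fin n) : Sm (sl00 H x α) := sm_sl hH hx _
theorem sm10 (α : Fin n) : Sm (sl10 H x α) := sm_sl hH hx _
theorem sm01 (α : Fin n) : Sm (sl01 H x α) := sm_sl hH hx _
theorem sm20 (α : Fin n) : Sm (sl20 H x α) := sm_sl hH hx _
theorem sm11 (α : Fin n) : Sm (sl11 H x α) := sm_sl hH hx _
theorem sm02 (α : Fin n) : Sm (sl02 H x α) := sm_sl hH hx _

theorem sm_var (α : Fin n) : Sm (varDer2 H x α) :=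
  (((((sm00 hH hx α).sub (sm10 hH hx α).d1).sub (sm01 hH hx α).d2).add (sm20 hH hx α).d1.d1).add
    (sm11 hH hx α).d2.d1).add (sm02 hH hx α).d2.d2

theorem sm_edge1 : Sm (edge1 H x) :=
  Sm.sum fun α => ((hx.pt.app α).mul
    (((sm10 hH hx α).sub (sm20 hH hx α).d1).sub (sm11 hH hx α).d2)).add
    ((hx.d1.pt.app α).mul (sm20 hH hx α))
theorem sm_edge2 : Sm (edge2 H x) :=
  Sm.sum fun α => ((hx.pt.app α).mul
    (((sm01 hH hx α).sub (sm02 hH hx α).d2).sub (sm11 hH hx α).d1)).add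
    ((hx.d2.pt.app α).mul (sm02 hH hx α))
theorem sm_corner : Sm (corner2 H x) :=
  Sm.sum fun α => (hx.pt.app α).mul (sm11 hH hx α)

theorem sm_H : Sm (fun t a b => H (jet2 x t a b)) := hH.comp (sm_jet hx)

theorem pt_H (t a b : ℝ) : pt2 (fun t a b => H (jet2 x t a b)) t a b = ∑ α,
    (pt2 x t a b α * sl00 H x α t a b + dz1 (pt2 x) t a b α * sl10 H x α t a b
    + dz2 (pt2 x) t a b α * sl01 H x α t a b + dz1 (dz1 (pt2 x)) t a b α * sl20 H x α t a b
    + dz1 (dz2 (pt2 x)) t a b α * sl11 H x α t a b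
    + dz2 (dz2 (pt2 x)) t a b α * sl02 H x α t a b) := by
  have hj : HasDerivAt (fun s => jet2 x s a b) (0, 0, pt2 x t a b, dz1 (pt2 x) t a b,
      dz2 (pt2 x) t a b, dz1 (dz1 (pt2 x)) t a b, dz1 (dz2 (pt2 x)) t a b,
      dz2 (dz2 (pt2 x)) t a b) t := by
    rw [← hx.c1t, ← hx.c2t, ← hx.d1.c1t, ← hx.d2.c1t, ← hx.d2.c2t]
    exact (hasDerivAt_const t a).prodMk ((hasDerivAt_const t b).prodMk ((hx.ht t a b).prodMk
      ((hx.d1.ht t a b).prodMk ((hx.d2.ht t a b).prodMk ((hx.d1.d1.ht t a b).prodMk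
      ((hx.d2.d1.ht t a b).prodMk (hx.d2.d2.ht t a b)))))))
  have hd := ((hH.differentiable (by simp)) (jet2 x t a b)).hasFDerivAt.comp_hasDerivAt t hj
  exact hd.deriv.trans (jet_lin _ _ _ _ _ _ _)

theorem d_edge1 (t a b : ℝ) : dz1 (edge1 H x) t a b = ∑ α,
    ((dz1 (pt2 x) t a b α * (sl10 H x α t a b - dz1 (sl20 H x α) t a b - dz2 (sl11 H x α) t a b)
      + pt2 x t a b α * (dz1 (sl10 H x α) t a b - dz1 (dz1 (sl20 H x α)) t a b
          - dz1 (dz2 (sl11 H x α)) t a b))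
      + (dz1 (dz1 (pt2 x)) t a b α * sl20 H x α t a b
        + dz1 (pt2 x) t a b α * dz1 (sl20 H x α) t a b)) := by
  apply HasDerivAt.deriv
  unfold edge1
  rw [hx.c1t]
  refine HasDerivAt.fun_sum fun α _ => ?_
  have e1 := hasDerivAt_pi.1 (hx.pt.h1 t a b) α
  have e2 := hasDerivAt_pi.1 (hx.pt.d1.h1 t a b) α
  exact (e1.mul ((((sm10 hH hx α).h1 t a b).sub ((sm20 hH hx α).d1.h1 t a b)).sub
    ((sm11 hH hx α).d2.h1 t a b))).add (e2.mul ((sm20 hH hx α).h1 t a b))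

theorem d_edge2 (t a b : ℝ) : dz2 (edge2 H x) t a b = ∑ α,
    ((dz2 (pt2 x) t a b α * (sl01 H x α t a b - dz2 (sl02 H x α) t a b - dz1 (sl11 H x α) t a b)
      + pt2 x t a b α * (dz2 (sl01 H x α) t a b - dz2 (dz2 (sl02 H x α)) t a b
          - dz1 (dz2 (sl11 H x α)) t a b))
      + (dz2 (dz2 (pt2 x)) t a b α * sl02 H x α t a b
        + dz2 (pt2 x) t a b α * dz2 (sl02 H x α) t a b)) := by
  apply HasDerivAt.deriv
  unfold edge2
  rw [hx.c2t]
  refine HasDerivAt.fun_sum fun α _ => ?_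
  have e1 := hasDerivAt_pi.1 (hx.pt.h2 t a b) α
  have e2 := hasDerivAt_pi.1 (hx.pt.d2.h2 t a b) α
  rw [← (sm11 hH hx α).c12]
  exact (e1.mul ((((sm01 hH hx α).h2 t a b).sub ((sm02 hH hx α).d2.h2 t a b)).sub
    ((sm11 hH hx α).d1.h2 t a b))).add (e2.mul ((sm02 hH hx α).h2 t a b))

theorem d2_corner : dz2 (corner2 H x) = fun t a b => ∑ α,
    (dz2 (pt2 x) t a b α * sl11 H x α t a b + pt2 x t a b α * dz2 (sl11 H x α) t a b) := by
  funext t a b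
  apply HasDerivAt.deriv
  unfold corner2
  refine HasDerivAt.fun_sum fun α _ => ?_
  exact (hasDerivAt_pi.1 (hx.pt.h2 t a b) α).mul ((sm11 hH hx α).h2 t a b)

theorem d12_corner (t a b : ℝ) : dz1 (dz2 (corner2 H x)) t a b = ∑ α,
    ((dz1 (dz2 (pt2 x)) t a b α * sl11 H x α t a b + dz2 (pt2 x) t a b α * dz1 (sl11 H x α) t a b)
    + (dz1 (pt2 x) t a b α * dz2 (sl11 H x α) t a b
      + pt2 x t a b α * dz1 (dz2 (sl11 H x α)) t a b)) := by
  rw [d2_corner hH hx]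
  apply HasDerivAt.deriv
  refine HasDerivAt.fun_sum fun α _ => ?_
  exact ((hasDerivAt_pi.1 (hx.pt.d2.h1 t a b) α).mul ((sm11 hH hx α).h1 t a b)).add
    ((hasDerivAt_pi.1 (hx.pt.h1 t a b) α).mul ((sm11 hH hx α).d2.h1 t a b))

theorem pt_H' (t a b : ℝ) : pt2 (fun t a b => H (jet2 x t a b)) t a b =
    (∑ α, pt2 x t a b α * varDer2 H x α t a b) + dz1 (edge1 H x) t a b + dz2 (edge2 H x) t a b
      + dz1 (dz2 (corner2 H x)) t a b := by
  rw [pt_H hH hx, d_edge1 hH hx, d_edge2 hH hx, d12_corner hH hx]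
  simp only [← Finset.sum_add_distrib]
  refine Finset.sum_congr rfl fun α _ => ?_
  unfold varDer2
  ring
end plant

theorem ct_in {f : ℝ → ℝ → ℝ} (hf : Continuous (fun p : ℝ × ℝ => f p.1 p.2)) (a A B : ℝ) :
    IntervalIntegrable (fun b => f a b) volume A B :=
  (hf.comp (f := fun b => (a, b)) (by fun_prop)).intervalIntegrable _ _

theorem ct_out {f : ℝ → ℝ → ℝ} (hf : Continuous (fun p : ℝ × ℝ => f p.1 p.2)) (L2 A B : ℝ) :
    IntervalIntegrable (fun a => ∫ b in (0:ℝ)..L2, f a b) volume A B :=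
  (intervalIntegral.continuous_parametric_intervalIntegral_of_continuous' hf 0
    L2).intervalIntegrable _ _

theorem int2_add {f g : ℝ → ℝ → ℝ} (hf : Continuous (fun p : ℝ × ℝ => f p.1 p.2))
    (hg : Continuous (fun p : ℝ × ℝ => g p.1 p.2)) (L1 L2 : ℝ) :
    (∫ a in (0:ℝ)..L1, ∫ b in (0:ℝ)..L2, (f a b + g a b)) =
      (∫ a in (0:ℝ)..L1, ∫ b in (0:ℝ)..L2, f a b) + ∫ a in (0:ℝ)..L1, ∫ b in (0:ℝ)..L2, g a b := by
  rw [← intervalIntegral.integral_add (ct_out hf _ _ _) (ct_out hg _ _ _)]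
  refine intervalIntegral.integral_congr fun a _ => ?_
  exact intervalIntegral.integral_add (ct_in hf _ _ _) (ct_in hg _ _ _)

theorem int2_sum {ι : Type*} [Fintype ι] {f : ι → ℝ → ℝ → ℝ} (c : ι → ℝ)
    (hf : ∀ i, Continuous (fun p : ℝ × ℝ => f i p.1 p.2)) (L1 L2 : ℝ) :
    (∫ a in (0:ℝ)..L1, ∫ b in (0:ℝ)..L2, ∑ i, c i * f i a b) =
      ∑ i, c i * ∫ a in (0:ℝ)..L1, ∫ b in (0:ℝ)..L2, f i a b := by
  simp only [← intervalIntegral.integral_const_mul]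
  rw [← intervalIntegral.integral_finsetSum]
  · refine intervalIntegral.integral_congr fun a _ => ?_
    exact intervalIntegral.integral_finsetSum fun i _ => (ct_in (hf i) _ _ _).const_mul (c i)
  · intro i _
    simp only [intervalIntegral.integral_const_mul]
    exact (ct_out (hf i) _ _ _).const_mul (c i)

theorem int2_congr {f g : ℝ → ℝ → ℝ} {L1 L2 : ℝ} (h1 : 0 ≤ L1) (h2 : 0 ≤ L2)
    (h : ∀ a ∈ Set.Icc 0 L1, ∀ b ∈ Set.Icc 0 L2, f a b = g a b) :
    (∫ a in (0:ℝ)..L1, ∫ b in (0:ℝ)..L2, f a b) = ∫ a in (0:ℝ)..L1, ∫ b in (0:ℝ)..L2, g a b := by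
  refine intervalIntegral.integral_congr fun a ha => ?_
  refine intervalIntegral.integral_congr fun b hb => ?_
  rw [Set.uIcc_of_le h1] at ha
  rw [Set.uIcc_of_le h2] at hb
  exact h a ha b hb

theorem skew_zero {m : ℕ} (J : Fin m → Fin m → ℝ) (hJ : ∀ i j, J i j = -J j i) (v : Fin m → ℝ) :
    ∑ i, ∑ j, v i * J i j * v j = 0 := by
  have h : ∑ i, ∑ j, v i * J i j * v j = -∑ i, ∑ j, v i * J i j * v j := by
    conv_lhs => rw [Finset.sum_comm]
    simp only [← Finset.sum_neg_distrib]
    refine Finset.sum_congr rfl fun i _ => Finset.sum_congr rfl fun j _ => ?_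
    rw [hJ j i]; ring
  linarith

theorem ph_alg {m l : ℕ} (J R : Fin m → Fin m → ℝ) (hJ : ∀ i j, J i j = -J j i) (v : Fin m → ℝ)
    (G : Fin m → Fin l → ℝ) (u : Fin l → ℝ) :
    ∑ i, ((∑ j, (J i j - R i j) * v j) + ∑ ξ, G i ξ * u ξ) * v i =
      -(∑ i, ∑ j, v i * R i j * v j) + ∑ ξ, u ξ * ∑ i, G i ξ * v i := by
  have e : ∀ i, ((∑ j, (J i j - R i j) * v j) + ∑ ξ, G i ξ * u ξ) * v i =
      (∑ j, v i * J i j * v j) - (∑ j, v i * R i j * v j) + ∑ ξ, u ξ * (G i ξ * v i) := by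
    intro i
    rw [add_mul, Finset.sum_mul, Finset.sum_mul, ← Finset.sum_sub_distrib]
    congr 1 <;> refine Finset.sum_congr rfl fun j _ => ?_ <;> ring
  simp only [e, Finset.mul_sum]
  rw [Finset.sum_add_distrib, Finset.sum_sub_distrib, skew_zero J hJ, Finset.sum_comm (s := Finset.univ (α := Fin m)) (t := Finset.univ (α := Fin l))]
  ring

/-- the closed loop of an in-domain actuated port-Hamiltonian plant on the
rectangle `B` and a finite-dimensional port-Hamiltonian controller, coupled through the
power-conserving interconnection, dissipates the closed-loop Hamiltonian. -/
theorem statement4 {n l nc : ℕ} (L1 L2 : ℝ) (hL1 : 0 < L1) (hL2 : 0 < L2)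
    (H : Jet2 n → ℝ) (hH : ContDiff ℝ (⊤ : ℕ∞) H)
    (x : ℝ → ℝ → ℝ → Fin n → ℝ)
    (hx : ContDiff ℝ (⊤ : ℕ∞) (fun q : ℝ × ℝ × ℝ => x q.1 q.2.1 q.2.2))
    (J R : Fin n → Fin n → ℝ → ℝ → ℝ → ℝ)
    (G : Fin n → Fin l → ℝ → ℝ → ℝ → ℝ)
    (hJ : ∀ α β, ContDiff ℝ (⊤ : ℕ∞) (fun q : ℝ × ℝ × ℝ => J α β q.1 q.2.1 q.2.2))
    (hR : ∀ α β, ContDiff ℝ (⊤ : ℕ∞) (fun q : ℝ × ℝ × ℝ => R α β q.1 q.2.1 q.2.2))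
    (hG : ∀ α ξ, ContDiff ℝ (⊤ : ℕ∞) (fun q : ℝ × ℝ × ℝ => G α ξ q.1 q.2.1 q.2.2))
    (hJskew : ∀ α β t a b, J α β t a b = -J β α t a b)
    (hRsym : ∀ α β t a b, R α β t a b = R β α t a b)
    (hRpsd : ∀ t a b (v : Fin n → ℝ),
      0 ≤ ∑ α : Fin n, ∑ β : Fin n, v α * R α β t a b * v β)
    (u : Fin l → ℝ → ℝ)
    -- the plant dynamics hold on `B`
    (hdyn : ∀ t, ∀ a ∈ Set.Icc (0:ℝ) L1, ∀ b ∈ Set.Icc (0:ℝ) L2, ∀ α,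
      pt2 x t a b α =
        (∑ β : Fin n, (J α β t a b - R α β t a b) * varDer2 H x β t a b)
          + ∑ ξ : Fin l, G α ξ t a b * u ξ t)
    -- all boundary contributions of `H` vanish along the solution
    (hb1 : ∀ t, ∀ b ∈ Set.Icc (0:ℝ) L2, edge1 H x t 0 b = 0 ∧ edge1 H x t L1 b = 0)
    (hb2 : ∀ t, ∀ a ∈ Set.Icc (0:ℝ) L1, edge2 H x t a 0 = 0 ∧ edge2 H x t a L2 = 0)
    (hcor : ∀ t, corner2 H x t 0 0 = 0 ∧ corner2 H x t L1 0 = 0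
      ∧ corner2 H x t 0 L2 = 0 ∧ corner2 H x t L1 L2 = 0)
    -- the finite-dimensional port-Hamiltonian controller
    (Hc : (Fin nc → ℝ) → ℝ) (hHc : ContDiff ℝ (⊤ : ℕ∞) Hc)
    (Jc Rc : Fin nc → Fin nc → ℝ) (Gc : Fin nc → Fin l → ℝ)
    (hJcskew : ∀ αc βc, Jc αc βc = -Jc βc αc)
    (hRcsym : ∀ αc βc, Rc αc βc = Rc βc αc)
    (hRcpsd : ∀ v : Fin nc → ℝ,
      0 ≤ ∑ αc : Fin nc, ∑ βc : Fin nc, v αc * Rc αc βc * v βc)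
    (xc : ℝ → Fin nc → ℝ) (hxc : ContDiff ℝ (⊤ : ℕ∞) xc)
    (uc : Fin l → ℝ → ℝ)
    (hcdyn : ∀ t αc, HasDerivAt (fun τ => xc τ αc)
      ((∑ βc : Fin nc, (Jc αc βc - Rc αc βc) * gradC Hc xc βc t)
        + ∑ ξ : Fin l, Gc αc ξ * uc ξ t) t)
    -- the power-conserving interconnection with a symmetric matrix `K`
    (K : Fin l → Fin l → ℝ) (hK : ∀ ξ η, K ξ η = K η ξ)
    (huc : ∀ ξ t, uc ξ t = ∑ η : Fin l, K ξ η *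
      (∫ a in (0:ℝ)..L1, ∫ b in (0:ℝ)..L2,
        ∑ α : Fin n, G α η t a b * varDer2 H x α t a b))
    (hu : ∀ ξ t, u ξ t = -∑ η : Fin l, K ξ η * ycOut Hc xc Gc η t)
    (t : ℝ) :
    HasDerivAt
      (fun τ => (∫ a in (0:ℝ)..L1, ∫ b in (0:ℝ)..L2, H (jet2 x τ a b)) + Hc (xc τ))
      (-(∫ a in (0:ℝ)..L1, ∫ b in (0:ℝ)..L2,
          ∑ α : Fin n, ∑ β : Fin n,
            varDer2 H x α t a b * R α β t a b * varDer2 H x β t a b)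
        - ∑ αc : Fin nc, ∑ βc : Fin nc,
            gradC Hc xc αc t * Rc αc βc * gradC Hc xc βc t) t
    ∧ (-(∫ a in (0:ℝ)..L1, ∫ b in (0:ℝ)..L2,
          ∑ α : Fin n, ∑ β : Fin n,
            varDer2 H x α t a b * R α β t a b * varDer2 H x β t a b)
        - ∑ αc : Fin nc, ∑ βc : Fin nc,
            gradC Hc xc αc t * Rc αc βc * gradC Hc xc βc t) ≤ 0 := by
  have hx : Sm x := hx
  have hv := sm_var hH hx
  have hbd1 : (∫ a in (0:ℝ)..L1, ∫ b in (0:ℝ)..L2, dz1 (edge1 H x) t a b) = 0 := by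
    rw [swap_int ((sm_edge1 hH hx).d1.cont2 t)]
    simp only [(sm_edge1 hH hx).ftc1]
    refine (intervalIntegral.integral_congr (g := fun _ => (0:ℝ)) fun b hb => ?_).trans (by simp)
    rw [Set.uIcc_of_le hL2.le] at hb
    simp [hb1 t b hb]
  have hbd2 : (∫ a in (0:ℝ)..L1, ∫ b in (0:ℝ)..L2, dz2 (edge2 H x) t a b) = 0 := by
    simp only [(sm_edge2 hH hx).ftc2]
    refine (intervalIntegral.integral_congr (g := fun _ => (0:ℝ)) fun a ha => ?_).trans (by simp)
    rw [Set.uIcc_of_le hL1.le] at ha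
    simp [hb2 t a ha]
  have hC := sm_corner hH hx
  have hbd3 : (∫ a in (0:ℝ)..L1, ∫ b in (0:ℝ)..L2, dz1 (dz2 (corner2 H x)) t a b) = 0 := by
    rw [swap_int (hC.d2.d1.cont2 t)]
    simp only [hC.d2.ftc1]
    rw [intervalIntegral.integral_sub (ct_in (hC.d2.cont2 t) _ _ _) (ct_in (hC.d2.cont2 t) _ _ _),
      hC.ftc2, hC.ftc2]
    obtain ⟨c1, c2, c3, c4⟩ := hcor t
    simp [c1, c2, c3, c4]
  have hsv : Sm (fun t a b => ∑ α, pt2 x t a b α * varDer2 H x α t a b) :=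
    Sm.sum fun α => (hx.pt.app α).mul (hv α)
  have hsR : Sm (fun t a b => ∑ α : Fin n, ∑ β : Fin n,
      varDer2 H x α t a b * R α β t a b * varDer2 H x β t a b) :=
    Sm.sum fun α => Sm.sum fun β => ((hv α).mul (hR α β)).mul (hv β)
  have hsG : ∀ ξ, Sm (fun t a b => ∑ α : Fin n, G α ξ t a b * varDer2 H x α t a b) :=
    fun ξ => Sm.sum fun α => Sm.mul (hG α ξ) (hv α)
  have hI : (∫ a in (0:ℝ)..L1, ∫ b in (0:ℝ)..L2, pt2 (fun t a b => H (jet2 x t a b)) t a b) =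
      -(∫ a in (0:ℝ)..L1, ∫ b in (0:ℝ)..L2, ∑ α : Fin n, ∑ β : Fin n,
          varDer2 H x α t a b * R α β t a b * varDer2 H x β t a b)
      + ∑ ξ, u ξ t * ∫ a in (0:ℝ)..L1, ∫ b in (0:ℝ)..L2,
          ∑ α : Fin n, G α ξ t a b * varDer2 H x α t a b := by
    simp only [pt_H' hH hx]
    rw [int2_add (((hsv.add (sm_edge1 hH hx).d1).add (sm_edge2 hH hx).d2).cont2 t)
        (hC.d2.d1.cont2 t),
      int2_add ((hsv.add (sm_edge1 hH hx).d1).cont2 t) ((sm_edge2 hH hx).d2.cont2 t),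
      int2_add (hsv.cont2 t) ((sm_edge1 hH hx).d1.cont2 t), hbd1, hbd2, hbd3]
    simp only [add_zero]
    rw [← int2_sum (fun ξ => u ξ t) (fun ξ => (hsG ξ).cont2 t)]
    simp only [← intervalIntegral.integral_neg]
    rw [← int2_add (hsR.cont2 t).neg
      (continuous_finsetSum _ fun ξ _ => continuous_const.mul ((hsG ξ).cont2 t))]
    refine int2_congr hL1.le hL2.le fun a ha b hb => ?_
    rw [← ph_alg (fun i j => J i j t a b) (fun i j => R i j t a b) (fun i j => hJskew i j t a b)
      (fun i => varDer2 H x i t a b) (fun i ξ => G i ξ t a b) (fun ξ => u ξ t)]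
    refine Finset.sum_congr rfl fun α _ => ?_
    rw [hdyn t a ha b hb α]
  have hD1 := (sm_H hH hx).hasDerivAt_int2 L1 L2 t
  rw [hI] at hD1
  have hD2 : HasDerivAt (fun τ => Hc (xc τ)) (-(∑ αc : Fin nc, ∑ βc : Fin nc,
      gradC Hc xc αc t * Rc αc βc * gradC Hc xc βc t) + ∑ ξ, uc ξ t * ycOut Hc xc Gc ξ t) t := by
    have h := ((hHc.differentiable (by simp)) (xc t)).hasFDerivAt.comp_hasDerivAt t
      (hasDerivAt_pi.2 fun αc => hcdyn t αc)
    rw [lin_sum (fun w => fderiv ℝ Hc (xc t) w) (fun v w => map_add _ v w)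
      (fun c v => by simp)] at h
    have e := ph_alg Jc Rc hJcskew (fun i => gradC Hc xc i t) Gc (fun ξ => uc ξ t)
    unfold ycOut
    rw [← e]
    exact h
  have hcpl : ∑ ξ, u ξ t * (∫ a in (0:ℝ)..L1, ∫ b in (0:ℝ)..L2,
          ∑ α : Fin n, G α ξ t a b * varDer2 H x α t a b)
      + ∑ ξ, uc ξ t * ycOut Hc xc Gc ξ t = 0 := by
    simp only [hu, huc, neg_mul, Finset.sum_neg_distrib, Finset.sum_mul]
    rw [Finset.sum_comm, neg_add_eq_zero]
    refine Finset.sum_congr rfl fun ξ _ => Finset.sum_congr rfl fun η _ => ?_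
    rw [hK η ξ]; ring
  refine ⟨?_, ?_⟩
  · refine (hD1.add hD2).congr_deriv ?_
    linarith
  · have h1 : 0 ≤ ∫ a in (0:ℝ)..L1, ∫ b in (0:ℝ)..L2, ∑ α : Fin n, ∑ β : Fin n,
          varDer2 H x α t a b * R α β t a b * varDer2 H x β t a b :=
      intervalIntegral.integral_nonneg hL1.le fun a _ =>
        intervalIntegral.integral_nonneg hL2.le fun b _ =>
          hRpsd t a b (fun α => varDer2 H x α t a b)
    have h2 := hRcpsd (fun α => gradC Hc xc α t)
    linarith
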